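/- Let C₁, C₂, C₃ be the three sectors of a planar 3-cone with vertex 0 and opening angles α₁, α₂, α₃ ∈ (0,π) summing to 2π, with α₁ ≥ α₂, and let x ∈ ∂C₁ ∩ ∂C₂, x ≠ 0. Write C₁ = C̃₂ ∪ B where C̃₂ is the reflection of C₂ across the line separating C₁ and C₂ and B is a sector of angle α₁ - α₂, and let B̃ ⊆ C₃ be the reflection of B across that line. Then H_s(x, C₁) = ∫_{(C₃ \ B̃) - x} |y|^{-(2+s)} dy and H_s(x, C₂) = ∫_{(C₃ ∪ B) - x} |y|^{-(2+s)} dy, where H_s is the principal-value fractional curvature. -/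

import Mathlib

open MeasureTheory Set Filter Topology Real

/-- Principal-value fractional curvature in the plane. -/
noncomputable def fracCurvPV (s : ℝ) (E : Set (EuclideanSpace ℝ (Fin 2)))
    (x : EuclideanSpace ℝ (Fin 2)) (h : ℝ) : Prop :=
  Tendsto (fun ε : ℝ => ∫ y in {y | ε ≤ dist x y},
      (Set.indicator Eᶜ (fun _ => (1 : ℝ)) y - Set.indicator E (fun _ => (1 : ℝ)) y)
        * dist x y ^ (-(2 + s)))
    (𝓝[>] (0 : ℝ)) (𝓝 h)

/-- The closed sector of angles between `a` and `b` with vertex `0`. -/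
def Sec (a b : ℝ) : Set (EuclideanSpace ℝ (Fin 2)) :=
  {p | ∃ r θ : ℝ, 0 ≤ r ∧ a ≤ θ ∧ θ ≤ b ∧ p 0 = r * Real.cos θ ∧ p 1 = r * Real.sin θ}

/-!
If a reflection `R` fixes `x` and the sets `E` and `R⁻¹ E` overlap in a null set, then outside every
ball about `x` the kernel has the same mass on `E` as on `R⁻¹ E ⊆ Eᶜ`. These two contributions to
the truncated curvature of `E` cancel, which leaves the mass of `(E ∪ R⁻¹ E)ᶜ`. If this last set
stays away from `x`, the truncated curvatures do not depend on the radius once it is small.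

For `E = C₁` or `E = C₂` and the reflection across the axis, `E ∪ R⁻¹ E` is the sector `Sec (-α) α`
and its complement is, up to its boundary rays, `Sec α (2 * π - α)`. This is `C₃ \ B̃` when `α = α₁`
and `C₃ ∪ B` when `α = α₂`.
-/

section Cancellation

lemma setIntegral_compl_sub_setIntegral_of_measurePreserving {X F : Type*} [MeasurableSpace X]
    [NormedAddCommGroup F] [NormedSpace ℝ F] {μ : Measure X} {R : X → X}
    (hR : MeasurePreserving R μ μ) (hR' : MeasurableEmbedding R) {E : Set X}
    (hE : MeasurableSet E) (hdisj : AEDisjoint μ E (R ⁻¹' E)) {k : X → F}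
    (hk : Integrable k μ) (hkR : ∀ y, k (R y) = k y) :
    ∫ y in Eᶜ, k y ∂μ - ∫ y in E, k y ∂μ = ∫ y in (E ∪ R ⁻¹' E)ᶜ, k y ∂μ := by
  have hE' : MeasurableSet (R ⁻¹' E) := hR.measurable hE
  have hpre : ∫ y in R ⁻¹' E, k y ∂μ = ∫ y in E, k y ∂μ := by
    simpa only [hkR] using hR.setIntegral_preimage_emb hR' k E
  have hunion : ∫ y in E ∪ R ⁻¹' E, k y ∂μ = ∫ y in E, k y ∂μ + ∫ y in E, k y ∂μ := by
    rw [setIntegral_union₀ hdisj hE'.nullMeasurableSet hk.integrableOn hk.integrableOn, hpre]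
  rw [setIntegral_compl hE hk, setIntegral_compl (hE.union hE') hk, hunion, sub_sub]

lemma integral_indicator_compl_sub_indicator_mul {X : Type*} [MeasurableSpace X] {μ : Measure X}
    {E : Set X} (hE : MeasurableSet E) {k : X → ℝ} (hk : Integrable k μ) :
    ∫ y, (Eᶜ.indicator (fun _ => (1 : ℝ)) y - E.indicator (fun _ => (1 : ℝ)) y) * k y ∂μ
      = ∫ y in Eᶜ, k y ∂μ - ∫ y in E, k y ∂μ := by
  rw [← integral_indicator hE.compl, ← integral_indicator hE,
    ← integral_sub (hk.indicator hE.compl) (hk.indicator hE)]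
  refine integral_congr_ae (ae_of_all _ fun y => ?_)
  by_cases hy : y ∈ E <;> simp [hy]

lemma integrableOn_dist_rpow_neg {V : Type*} [NormedAddCommGroup V] [NormedSpace ℝ V]
    [FiniteDimensional ℝ V] [MeasurableSpace V] [BorelSpace V] (μ : Measure V)
    [μ.IsAddHaarMeasure] {q : ℝ} (hq : (Module.finrank ℝ V : ℝ) < q) (x : V) {ε : ℝ}
    (hε : 0 < ε) : IntegrableOn (fun y => dist x y ^ (-q)) {y | ε ≤ dist x y} μ := by
  have hq0 : 0 < q := (Nat.cast_nonneg _).trans_lt hq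
  have hA : MeasurableSet {y | ε ≤ dist x y} := measurableSet_le measurable_const (by fun_prop)
  have hdom : Integrable (fun y => (1 + 1 / ε) ^ q * (1 + ‖y - x‖) ^ (-q)) μ :=
    ((integrable_one_add_norm hq).comp_sub_right x).const_mul _
  refine hdom.integrableOn.mono'
    ((continuous_const.dist continuous_id).measurable.pow_const _).aestronglyMeasurable ?_
  refine (ae_restrict_iff' hA).2 (ae_of_all _ fun y (hy : ε ≤ dist x y) => ?_)
  have hd : 0 < dist x y := hε.trans_le hy
  have hbound : 1 + dist x y ≤ (1 + 1 / ε) * dist x y := by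
    have : 1 ≤ 1 / ε * dist x y := by rwa [one_div_mul_eq_div, one_le_div hε]
    linarith
  calc ‖dist x y ^ (-q)‖ = (1 + 1 / ε) ^ q * ((1 + 1 / ε) * dist x y) ^ (-q) := by
        rw [norm_of_nonneg (by positivity), mul_rpow (by positivity) hd.le, ← mul_assoc,
          ← rpow_add (by positivity), add_neg_cancel, rpow_zero, one_mul]
    _ ≤ (1 + 1 / ε) ^ q * (1 + dist x y) ^ (-q) := by
        refine mul_le_mul_of_nonneg_left ?_ (by positivity)
        exact rpow_le_rpow_of_nonpos (by positivity) hbound (neg_nonpos.2 hq0.le)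
    _ = (1 + 1 / ε) ^ q * (1 + ‖y - x‖) ^ (-q) := by rw [dist_comm, dist_eq_norm]

lemma setIntegral_image_sub_right_norm {V : Type*} [NormedAddCommGroup V] [MeasurableSpace V]
    [BorelSpace V] (μ : Measure V) [μ.IsAddRightInvariant] (f : ℝ → ℝ) (D : Set V) (x : V) :
    ∫ y in (fun z => z - x) '' D, f ‖y‖ ∂μ = ∫ y in D, f (dist x y) ∂μ := by
  rw [(measurePreserving_sub_right μ x).setIntegral_image_emb
    (MeasurableEquiv.subRight x).measurableEmbedding]
  simp only [dist_comm x, dist_eq_norm]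

theorem fracCurvPV_of_aedisjoint_preimage {s : ℝ} (hs : 0 < s)
    {E D : Set (EuclideanSpace ℝ (Fin 2))} (hE : MeasurableSet E) {x : EuclideanSpace ℝ (Fin 2)}
    {R : EuclideanSpace ℝ (Fin 2) ≃ₗᵢ[ℝ] EuclideanSpace ℝ (Fin 2)} (hRx : R x = x)
    (hdisj : AEDisjoint volume E (R ⁻¹' E)) (hD : ((E ∪ R ⁻¹' E)ᶜ : Set _) =ᵐ[volume] D)
    (hxD : Dᶜ ∈ 𝓝 x) : fracCurvPV s E x (∫ y in D, dist x y ^ (-(2 + s))) := by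
  obtain ⟨δ, hδ, hball⟩ := Metric.mem_nhds_iff.1 hxD
  have hdist : ∀ y, dist x (R y) = dist x y := fun y => by rw [← R.dist_map x y, hRx]
  refine tendsto_const_nhds.congr' ?_
  filter_upwards [Ioo_mem_nhdsGT hδ] with ε hε
  set A : Set (EuclideanSpace ℝ (Fin 2)) := {y | ε ≤ dist x y} with hA_def
  have hA : MeasurableSet A := measurableSet_le measurable_const (by fun_prop)
  have hk : IntegrableOn (fun y => dist x y ^ (-(2 + s))) A :=
    integrableOn_dist_rpow_neg volume (by simp [hs]) x hε.1
  have hRA : R ⁻¹' A = A := by ext y; simp [hA_def, hdist]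
  have hR : MeasurePreserving R (volume.restrict A) (volume.restrict A) := by
    simpa only [hRA] using R.measurePreserving.restrict_preimage hA
  have hDA : D ∩ A = D := inter_eq_left.2 fun y hy => by
    by_contra h
    exact hball (by simpa [hA_def, dist_comm] using (not_le.1 h).trans hε.2) hy
  have hDA' : ((E ∪ R ⁻¹' E)ᶜ ∩ A : Set _) =ᵐ[volume] D := by
    simpa only [hDA] using ae_eq_set_inter hD (ae_eq_refl A)
  have hU : MeasurableSet (E ∪ R ⁻¹' E) := hE.union (R.continuous.measurable hE)
  have hdisjA : AEDisjoint (volume.restrict A) E (R ⁻¹' E) :=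
    Measure.restrict_le_self.absolutelyContinuous hdisj
  rw [integral_indicator_compl_sub_indicator_mul hE hk,
    setIntegral_compl_sub_setIntegral_of_measurePreserving hR
      R.toHomeomorph.measurableEmbedding hE hdisjA hk fun y => by rw [hdist],
    Measure.restrict_restrict hU.compl, setIntegral_congr_set hDA']

end Cancellation

section Sectors

variable {a b c θ φ : ℝ} {p : EuclideanSpace ℝ (Fin 2)}

lemma mem_Sec_self_iff : p ∈ Sec θ θ ↔ p 0 = ‖p‖ * cos θ ∧ p 1 = ‖p‖ * sin θ := by
  constructor
  · rintro ⟨r, θ', hr, hθ, hθ', h0, h1⟩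
    obtain rfl : θ' = θ := le_antisymm hθ' hθ
    have hnorm : ‖p‖ = r := by
      rw [EuclideanSpace.norm_eq, sqrt_eq_iff_mul_self_eq (by positivity) hr]
      simp only [Fin.sum_univ_two, Real.norm_eq_abs, sq_abs, h0, h1]
      linear_combination r ^ 2 * sin_sq_add_cos_sq θ'
    rw [hnorm]
    exact ⟨h0, h1⟩
  · rintro ⟨h0, h1⟩
    exact ⟨‖p‖, θ, norm_nonneg p, le_rfl, le_rfl, h0, h1⟩

lemma mem_Sec_iff_exists_mem_Sec_self : p ∈ Sec a b ↔ ∃ θ ∈ Icc a b, p ∈ Sec θ θ := by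
  constructor
  · rintro ⟨r, θ, hr, ha, hb, hp⟩
    exact ⟨θ, ⟨ha, hb⟩, r, θ, hr, le_rfl, le_rfl, hp⟩
  · rintro ⟨θ, ⟨ha, hb⟩, r, θ', hr, hθ, hθ', hp⟩
    exact ⟨r, θ', hr, ha.trans hθ, hθ'.trans hb, hp⟩

lemma zero_mem_Sec_self (θ : ℝ) : (0 : EuclideanSpace ℝ (Fin 2)) ∈ Sec θ θ := by
  simp [mem_Sec_self_iff]

lemma exists_int_sub_eq_of_mem_Sec_self (hp : p ≠ 0) (hθ : p ∈ Sec θ θ) (hφ : p ∈ Sec φ φ) :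
    ∃ k : ℤ, θ - φ = 2 * π * k := by
  rw [mem_Sec_self_iff] at hθ hφ
  have hcos : cos θ = cos φ := mul_left_cancel₀ (norm_ne_zero_iff.2 hp) (hθ.1.symm.trans hφ.1)
  have hsin : sin θ = sin φ := mul_left_cancel₀ (norm_ne_zero_iff.2 hp) (hθ.2.symm.trans hφ.2)
  exact Real.Angle.angle_eq_iff_two_pi_dvd_sub.1 (Real.Angle.cos_sin_inj hcos hsin)

lemma isClosed_Sec (a b : ℝ) : IsClosed (Sec a b) := by
  have hgraph : IsClosed {q : EuclideanSpace ℝ (Fin 2) × Icc a b | q.1 ∈ Sec q.2 q.2} := by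
    simp only [mem_Sec_self_iff]
    exact (isClosed_eq (by fun_prop) (by fun_prop)).inter
      (isClosed_eq (by fun_prop) (by fun_prop))
  convert isClosedMap_fst_of_compactSpace _ hgraph using 1
  ext p
  rw [mem_Sec_iff_exists_mem_Sec_self]
  simp

lemma measurableSet_Sec (a b : ℝ) : MeasurableSet (Sec a b) := (isClosed_Sec a b).measurableSet

lemma Sec_union_Sec (hab : a ≤ b) (hbc : b ≤ c) : Sec a b ∪ Sec b c = Sec a c := by
  ext p
  rw [mem_union, mem_Sec_iff_exists_mem_Sec_self (a := a) (b := b),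
    mem_Sec_iff_exists_mem_Sec_self (a := b) (b := c),
    mem_Sec_iff_exists_mem_Sec_self (a := a) (b := c), ← Icc_union_Icc_eq_Icc hab hbc]
  simp only [mem_union, or_and_right, exists_or]

lemma Sec_add_two_pi (a b : ℝ) : Sec (a + 2 * π) (b + 2 * π) = Sec a b := by
  ext p
  constructor
  · rintro ⟨r, θ, hr, ha, hb, h0, h1⟩
    exact ⟨r, θ - 2 * π, hr, by linarith, by linarith, by rwa [cos_sub_two_pi],
      by rwa [sin_sub_two_pi]⟩
  · rintro ⟨r, θ, hr, ha, hb, h0, h1⟩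
    exact ⟨r, θ + 2 * π, hr, by linarith, by linarith, by rwa [cos_add_two_pi],
      by rwa [sin_add_two_pi]⟩

lemma Sec_self_add_two_pi (a : ℝ) : Sec a (a + 2 * π) = univ := by
  refine eq_univ_of_forall fun p => ?_
  set z : ℂ := ⟨p 0, p 1⟩
  have hθ := toIcoMod_mem_Ico two_pi_pos a z.arg
  rw [← self_sub_toIcoDiv_zsmul, zsmul_eq_mul] at hθ
  refine ⟨‖z‖, _, norm_nonneg z, hθ.1, hθ.2.le, ?_, ?_⟩
  · rw [cos_sub_int_mul_two_pi, Complex.norm_mul_cos_arg]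
  · rw [sin_sub_int_mul_two_pi, Complex.norm_mul_sin_arg]

lemma volume_Sec_self (θ : ℝ) : volume (Sec θ θ) = 0 := by
  let v : EuclideanSpace ℝ (Fin 2) := !₂[cos θ, sin θ]
  have hsub : Sec θ θ ⊆ (ℝ ∙ v : Submodule ℝ (EuclideanSpace ℝ (Fin 2))) := fun p hp => by
    obtain ⟨h0, h1⟩ := mem_Sec_self_iff.1 hp
    refine Submodule.mem_span_singleton.2 ⟨‖p‖, ?_⟩
    ext i
    fin_cases i <;> simp [v, ← h0, ← h1]
  have hproper : (ℝ ∙ v : Submodule ℝ (EuclideanSpace ℝ (Fin 2))) ≠ ⊤ := fun h => by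
    have hrank := finrank_span_le_card (R := ℝ) ({v} : Set (EuclideanSpace ℝ (Fin 2)))
    rw [h, finrank_top, finrank_euclideanSpace_fin] at hrank
    simp at hrank
  exact measure_mono_null hsub (Measure.addHaar_submodule volume _ hproper)

lemma aedisjoint_Sec_Sec (hc : c ≤ a + 2 * π) : AEDisjoint volume (Sec a b) (Sec b c) := by
  refine measure_mono_null (t := Sec a a ∪ Sec b b) ?_
    (measure_union_null (volume_Sec_self a) (volume_Sec_self b))
  rintro p ⟨hab, hbc⟩
  obtain ⟨θ, ⟨haθ, hθb⟩, hθ⟩ := mem_Sec_iff_exists_mem_Sec_self.1 hab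
  obtain ⟨φ, ⟨hbφ, hφc⟩, hφ⟩ := mem_Sec_iff_exists_mem_Sec_self.1 hbc
  rcases eq_or_ne p 0 with rfl | hp
  · exact Or.inl (zero_mem_Sec_self a)
  obtain ⟨k, hk⟩ := exists_int_sub_eq_of_mem_Sec_self hp hφ hθ
  rcases le_or_gt k 0 with hk0 | hk1
  · have : (k : ℝ) ≤ 0 := mod_cast hk0
    obtain rfl : θ = b := by nlinarith [pi_pos]
    exact Or.inr hθ
  · have : (1 : ℝ) ≤ k := mod_cast hk1
    obtain rfl : θ = a := by nlinarith [pi_pos]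
    exact Or.inl hθ

lemma Sec_sdiff_Sec_ae_eq (hab : a ≤ b) (hbc : b ≤ c) (hc : c ≤ a + 2 * π) :
    (Sec a c \ Sec b c : Set _) =ᵐ[volume] Sec a b := by
  rw [← Sec_union_Sec hab hbc, union_sdiff_right]
  exact (aedisjoint_Sec_Sec hc).sdiff_ae_eq_left

lemma compl_Sec_ae_eq (hab : a ≤ b) (hb : b ≤ a + 2 * π) :
    ((Sec a b)ᶜ : Set _) =ᵐ[volume] Sec b (a + 2 * π) := by
  rw [← Sec_add_two_pi a b, compl_eq_univ_sdiff, ← Sec_self_add_two_pi b]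
  exact Sec_sdiff_Sec_ae_eq hb (by linarith) le_rfl

end Sectors

section AxisReflection

/-- The reflection of the plane across the horizontal axis, the line separating the first two
sectors of the cone. -/
noncomputable def axisReflection : EuclideanSpace ℝ (Fin 2) ≃ₗᵢ[ℝ] EuclideanSpace ℝ (Fin 2) :=
  (ℝ ∙ EuclideanSpace.single 0 1).reflection

@[simp] lemma axisReflection_apply_zero (y : EuclideanSpace ℝ (Fin 2)) :
    axisReflection y 0 = y 0 := by
  simp only [axisReflection, Submodule.reflection_singleton_apply,
    EuclideanSpace.inner_single_left, map_one, one_mul, PiLp.norm_single, norm_one, one_pow,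
    div_one, PiLp.sub_apply, PiLp.smul_apply, PiLp.single_eq_same, smul_eq_mul, mul_one,
    nsmul_eq_mul, Nat.cast_ofNat]
  ring

@[simp] lemma axisReflection_apply_one (y : EuclideanSpace ℝ (Fin 2)) :
    axisReflection y 1 = -y 1 := by
  simp [axisReflection, Submodule.reflection_singleton_apply]

lemma axisReflection_eq_self {x : EuclideanSpace ℝ (Fin 2)} (hx : x 1 = 0) :
    axisReflection x = x := by
  ext i
  fin_cases i <;> simp [hx]

lemma axisReflection_preimage_Sec (a b : ℝ) : axisReflection ⁻¹' Sec a b = Sec (-b) (-a) := by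
  ext p
  constructor
  · rintro ⟨r, θ, hr, ha, hb, h0, h1⟩
    rw [axisReflection_apply_zero] at h0
    rw [axisReflection_apply_one] at h1
    exact ⟨r, -θ, hr, neg_le_neg hb, neg_le_neg ha, by rwa [cos_neg],
      by rw [sin_neg]; linarith⟩
  · rintro ⟨r, θ, hr, ha, hb, h0, h1⟩
    exact ⟨r, -θ, hr, by linarith, by linarith, by simpa using h0, by simpa using h1⟩

end AxisReflection

section Cone

variable {s α α₁ α₂ : ℝ} {x : EuclideanSpace ℝ (Fin 2)}

lemma notMem_Sec_of_pos (hα : 0 < α) (hx0 : 0 < x 0) (hx1 : x 1 = 0) :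
    x ∉ Sec α (2 * π - α) := by
  intro hx
  obtain ⟨θ, ⟨hαθ, hθ⟩, hxθ⟩ := mem_Sec_iff_exists_mem_Sec_self.1 hx
  have hray : x ∈ Sec 0 0 := ⟨x 0, 0, hx0.le, le_rfl, le_rfl, by simp, by simp [hx1]⟩
  have hne : x ≠ 0 := by rintro rfl; simp at hx0
  obtain ⟨k, hk⟩ := exists_int_sub_eq_of_mem_Sec_self hne hxθ hray
  have hk0 : (0 : ℝ) < k := by
    by_contra! h
    nlinarith [pi_pos]
  have hk1 : (k : ℝ) < 1 := by nlinarith [pi_pos]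
  norm_cast at hk0 hk1
  omega

lemma fracCurvPV_of_union_preimage_eq_Sec (hs : 0 < s) (hα : α ∈ Ioc 0 π) (hx0 : 0 < x 0)
    (hx1 : x 1 = 0) {E : Set (EuclideanSpace ℝ (Fin 2))} (hE : MeasurableSet E)
    (hdisj : AEDisjoint volume E (axisReflection ⁻¹' E))
    (hunion : E ∪ axisReflection ⁻¹' E = Sec (-α) α) :
    fracCurvPV s E x (∫ y in Sec α (2 * π - α), dist x y ^ (-(2 + s))) := by
  obtain ⟨hα0, hαπ⟩ := hα
  refine fracCurvPV_of_aedisjoint_preimage hs hE (axisReflection_eq_self hx1) hdisj ?_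
    ((isClosed_Sec _ _).compl_mem_nhds (notMem_Sec_of_pos hα0 hx0 hx1))
  rw [hunion, ← neg_add_eq_sub]
  exact compl_Sec_ae_eq (by linarith) (by linarith)

lemma fracCurvPV_Sec_zero_left (hs : 0 < s) (hα : α ∈ Ioc 0 π) (hx0 : 0 < x 0) (hx1 : x 1 = 0) :
    fracCurvPV s (Sec 0 α) x (∫ y in Sec α (2 * π - α), dist x y ^ (-(2 + s))) := by
  have ⟨hα0, hαπ⟩ := hα
  refine fracCurvPV_of_union_preimage_eq_Sec hs hα hx0 hx1 (measurableSet_Sec _ _) ?_ ?_ <;>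
    rw [axisReflection_preimage_Sec, neg_zero]
  · exact (aedisjoint_Sec_Sec (by linarith)).symm
  · rw [union_comm, Sec_union_Sec (by linarith) hα0.le]

lemma fracCurvPV_Sec_zero_right (hs : 0 < s) (hα : α ∈ Ioc 0 π) (hx0 : 0 < x 0) (hx1 : x 1 = 0) :
    fracCurvPV s (Sec (-α) 0) x (∫ y in Sec α (2 * π - α), dist x y ^ (-(2 + s))) := by
  have ⟨hα0, hαπ⟩ := hα
  refine fracCurvPV_of_union_preimage_eq_Sec hs hα hx0 hx1 (measurableSet_Sec _ _) ?_ ?_ <;>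
    rw [axisReflection_preimage_Sec, neg_neg, neg_zero]
  · exact aedisjoint_Sec_Sec (by linarith)
  · exact Sec_union_Sec (by linarith) hα0.le

theorem fracCurv_threeCone_reflection_general (hs : 0 < s) (h₂ : 0 < α₂) (h₂₁ : α₂ ≤ α₁)
    (h₁ : α₁ ≤ π) (hx0 : 0 < x 0) (hx1 : x 1 = 0) :
    fracCurvPV s (Sec 0 α₁) x
      (∫ y in (fun z => z - x) '' (Sec α₁ (2 * π - α₂) \ Sec (2 * π - α₁) (2 * π - α₂)),
        ‖y‖ ^ (-(2 + s))) ∧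
    fracCurvPV s (Sec (-α₂) 0) x
      (∫ y in (fun z => z - x) '' (Sec α₁ (2 * π - α₂) ∪ Sec α₂ α₁),
        ‖y‖ ^ (-(2 + s))) := by
  have hdiff : (Sec α₁ (2 * π - α₂) \ Sec (2 * π - α₁) (2 * π - α₂) : Set _)
      =ᵐ[volume] Sec α₁ (2 * π - α₁) :=
    Sec_sdiff_Sec_ae_eq (by linarith) (by linarith) (by linarith)
  have hunion : Sec α₁ (2 * π - α₂) ∪ Sec α₂ α₁ = Sec α₂ (2 * π - α₂) := by
    rw [union_comm, Sec_union_Sec h₂₁ (by linarith)]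
  simp only [setIntegral_image_sub_right_norm volume (· ^ (-(2 + s)))]
  rw [setIntegral_congr_set hdiff, hunion]
  exact ⟨fracCurvPV_Sec_zero_left hs ⟨h₂.trans_le h₂₁, h₁⟩ hx0 hx1,
    fracCurvPV_Sec_zero_right hs ⟨h₂, h₂₁.trans h₁⟩ hx0 hx1⟩

end Cone

/-- Reflection identities for the fractional curvature of a planar 3-cone.
Here `C₁ = Sec 0 α₁`, `C₂ = Sec (-α₂) 0` and `C₃ = Sec α₁ (2π-α₂)`; the half-line
separating `C₁` and `C₂` is the positive horizontal axis, `x = (t,0)` with `t > 0` lies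
on it, `B = Sec α₂ α₁` is a sector of angle `α₁ - α₂` with `C₁ = C̃₂ ∪ B`, and
`B̃ = Sec (2π-α₁) (2π-α₂) ⊆ C₃` is the reflection of `B`. Then
`H_s(x,C₁) = ∫_{(C₃\B̃)-x} |y|^{-(2+s)} dy` and `H_s(x,C₂) = ∫_{(C₃∪B)-x} |y|^{-(2+s)} dy`. -/
theorem fracCurv_threeCone_reflection (s : ℝ) (hs : s ∈ Set.Ioo (0 : ℝ) 1)
    (α₁ α₂ α₃ : ℝ) (h₁ : α₁ ∈ Set.Ioo 0 π) (h₂ : α₂ ∈ Set.Ioo 0 π) (h₃ : α₃ ∈ Set.Ioo 0 π)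
    (hsum : α₁ + α₂ + α₃ = 2 * π) (h₂₁ : α₂ ≤ α₁)
    (x : EuclideanSpace ℝ (Fin 2)) (t : ℝ) (ht : 0 < t) (hx0 : x 0 = t) (hx1 : x 1 = 0) :
    fracCurvPV s (Sec 0 α₁) x
      (∫ y in (fun z => z - x) '' (Sec α₁ (2 * π - α₂) \ Sec (2 * π - α₁) (2 * π - α₂)),
        ‖y‖ ^ (-(2 + s))) ∧
    fracCurvPV s (Sec (-α₂) 0) x
      (∫ y in (fun z => z - x) '' (Sec α₁ (2 * π - α₂) ∪ Sec α₂ α₁),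
        ‖y‖ ^ (-(2 + s))) :=
  fracCurv_threeCone_reflection_general hs.1 h₂.1 h₂₁ h₁.2.le (hx0 ▸ ht) hx1
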